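/- For all dimensions d ≥ 2 and every integer 1 ≤ k ≤ d-1 there exists a constant C such that the following holds for every n ≥ 16. Let X_1, …, X_n be independent random points, each uniformly distributed in [0,1]^d, and let P = {X_1,…,X_n}. There exists a (measurably chosen) family 𝒮 of nonempty subsets of P with |𝒮| ≤ C·n almost surely, such that for every fixed (d+k)-sided query range r, the expected value of the minimum number of sets of 𝒮 whose union equals r ∩ P is at most C·(log₂ n)^{d-1}·(log₂ log₂ n)^k. -/

import Mathlib

open MeasureTheory

/-- A `(d+k)`-sided query range: `[a_1,b_1] × ⋯ × [a_k,b_k] × (-∞,b_{k+1}] × ⋯ × (-∞,b_d]`. -/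
def DPlusKSided (d k : ℕ) (r : Set (Fin d → ℝ)) : Prop :=
  ∃ a b : Fin d → ℝ,
    r = Set.univ.pi fun i : Fin d => if (i : ℕ) < k then Set.Icc (a i) (b i) else Set.Iic (b i)

/-- The uniform probability measure on the unit cube `[0,1]^d`. -/
noncomputable def uniformCube (d : ℕ) : Measure (Fin d → ℝ) :=
  volume.restrict (Set.univ.pi fun _ : Fin d => Set.Icc (0:ℝ) 1)

/-- The minimum number of members of `𝒮` whose union equals `r ∩ P`
(as an extended nonnegative real; `⊤` if no such cover exists). -/
noncomputable def coverNum {d : ℕ} (𝒮 : Finset (Finset (Fin d → ℝ)))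
    (P : Finset (Fin d → ℝ)) (r : Set (Fin d → ℝ)) : ENNReal :=
  sInf {c : ENNReal | ∃ m : ℕ, c = m ∧ ∃ s : Fin m → Finset (Fin d → ℝ),
    (∀ i, s i ∈ 𝒮) ∧ (⋃ i, ((s i : Set (Fin d → ℝ)))) = r ∩ ↑P}

/-! The points receive vectors of dyadic levels, each vector equally often, and each point spawns
`2 ^ e` cells: boxes with the point at a corner whose extent in the first `e = d - 1` coordinates is
prescribed by its level vector, unbounded below in the last coordinate, the height. Inside the unit
cube a query range is a box whose floor is at height `0`. In each of the first `e` coordinates it is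
cut into dyadic strips accumulating at its bounded sides. The points `q` of one class, given by a
strip in each coordinate, all lie in a single cell, namely that of the highest point with suitable
levels in the class of the next strips, except for those `q` that are higher still. Passing to the
next strips only halves each width, so by exchangeability such an exception has probability at most
`2 ^ e` over the number of points with suitable levels. There are `T ≈ log₂ n` strips per side, and
in a two-sided coordinate `t + 1` of the `2 T` levels suit the `t`-th strip, so summing over all
classes produces a factor `T` per coordinate and an additional harmonic sum `≈ log T` per two-sided
coordinate. -/

namespace RangeCover

section Exposure

variable {ι X : Type*} {f : X → ℝ} {Q B : Set X} {G : Finset ι}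

/-- The event that the point `ω q` lies in `Q`, strictly above all other points of `B` with index
in `G`; heights are measured by `f`. -/
def exposed (f : X → ℝ) (Q B : Set X) (G : Finset ι) (q : ι) : Set (ι → X) :=
  {ω | ω q ∈ Q ∧ ∀ i ∈ G, i ≠ q → ω i ∈ B → f (ω i) < f (ω q)}

lemma disjoint_exposed {i j : ι} (hi : i ∈ G) (hj : j ∈ G) (hij : i ≠ j) :
    Disjoint (exposed f B B G i) (exposed f B B G j) :=
  Set.disjoint_left.2 fun _ hωi hωj =>
    (hωi.2 j hj hij.symm hωj.1).asymm (hωj.2 i hi hij hωi.1)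

lemma exposed_subset_preimage_swap [DecidableEq ι] {i j : ι} (hj : j ∈ G) :
    exposed f Q B G i ⊆ (fun ω => ω ∘ Equiv.swap i j) ⁻¹' exposed f Q B G j := by
  rintro ω ⟨hωi, hω⟩
  refine ⟨by simpa using hωi, fun l hl hlj hlB => ?_⟩
  have hswap_mem : Equiv.swap i j l ∈ G := by grind
  have hswap_ne : Equiv.swap i j l ≠ i := by grind
  simpa using hω _ hswap_mem hswap_ne hlB

variable [MeasurableSpace X]

lemma measurableSet_exposed (hf : Measurable f) (hQ : MeasurableSet Q) (hB : MeasurableSet B)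
    (G : Finset ι) (q : ι) : MeasurableSet (exposed f Q B G q) := by
  have hlt (i : ι) : MeasurableSet {ω : ι → X | f (ω i) < f (ω q)} :=
    measurableSet_lt (by fun_prop) (by fun_prop)
  have hrepr : exposed f Q B G q = (Function.eval q ⁻¹' Q) ∩ ⋂ i ∈ G, ⋂ _ : i ≠ q,
      (Function.eval i ⁻¹' B)ᶜ ∪ {ω | f (ω i) < f (ω q)} := by
    ext ω
    simp [exposed, imp_iff_not_or]
  rw [hrepr]
  exact (measurable_pi_apply q hQ).inter <| G.measurableSet_biInter fun i _ =>
    .iInter fun _ => (measurable_pi_apply i hB).compl.union (hlt i)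

variable [Fintype ι] {μ : Measure X} [IsProbabilityMeasure μ]

/-- Exchangeability: transposing the indices `i` and `j` preserves the law of the points. -/
lemma measure_pi_exposed_le_of_mem (hf : Measurable f) (hB : MeasurableSet B) {j : ι}
    (hj : j ∈ G) (i : ι) :
    Measure.pi (fun _ => μ) (exposed f B B G i) ≤ Measure.pi (fun _ => μ) (exposed f B B G j) := by
  classical
  have hswap := measurePreserving_arrowCongr' (fun _ : ι => μ) (fun _ => μ) (Equiv.swap i j)
    (.refl X) fun _ => .id μ
  calc Measure.pi (fun _ => μ) (exposed f B B G i)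
      ≤ _ := measure_mono (exposed_subset_preimage_swap hj)
    _ = _ := hswap.measure_preimage (measurableSet_exposed hf hB hB G j).nullMeasurableSet

lemma card_mul_measure_pi_exposed_le_one (hf : Measurable f) (hB : MeasurableSet B) (G : Finset ι)
    (q : ι) : G.card * Measure.pi (fun _ => μ) (exposed f B B G q) ≤ 1 := by
  calc G.card * Measure.pi (fun _ => μ) (exposed f B B G q)
      ≤ ∑ i ∈ G, Measure.pi (fun _ => μ) (exposed f B B G i) := by
        rw [← nsmul_eq_mul]
        exact G.card_nsmul_le_sum _ _ fun i hi => measure_pi_exposed_le_of_mem hf hB hi q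
    _ ≤ Measure.pi (fun _ : ι => μ) Set.univ :=
        sum_measure_le_measure_univ
          (fun i _ => (measurableSet_exposed hf hB hB G i).nullMeasurableSet)
          fun i hi j hj hij => (disjoint_exposed hi hj hij).aedisjoint
    _ = 1 := measure_univ

lemma measure_pi_exposed_le_mul (hf : Measurable f) (hQ : MeasurableSet Q) (hB : MeasurableSet B)
    {m : ENNReal} (hQB : ∀ A, MeasurableSet A → μ (Q ∩ f ⁻¹' A) ≤ m * μ (B ∩ f ⁻¹' A))
    (G : Finset ι) (q : ι) :
    Measure.pi (fun _ => μ) (exposed f Q B G q) ≤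
      m * Measure.pi (fun _ => μ) (exposed f B B G q) := by
  classical
  have hQm := measurableSet_exposed hf hQ hB G q
  have hBm := measurableSet_exposed hf hB hB G q
  rw [← lintegral_indicator_one hQm, ← lintegral_indicator_const hBm]
  refine lintegral_le_of_lmarginal_le {q} (measurable_one.indicator hQm)
    (measurable_const.indicator hBm) fun ω => ?_
  let A : Set ℝ := ⋂ i ∈ G, ⋂ _ : i ≠ q, ⋂ _ : ω i ∈ B, Set.Ioi (f (ω i))
  have hA : MeasurableSet A := G.measurableSet_biInter fun i _ =>
    .iInter fun _ => .iInter fun _ => measurableSet_Ioi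
  have hsection (D : Set X) :
      Function.update ω q ⁻¹' exposed f D B G q = D ∩ f ⁻¹' A := by
    ext x
    simp +contextual [exposed, A, Function.update_of_ne]
  simp only [lmarginal_singleton]
  calc ∫⁻ x, (exposed f Q B G q).indicator 1 (Function.update ω q x) ∂μ
      = μ (Q ∩ f ⁻¹' A) := by
        rw [← lintegral_indicator_one (hQ.inter (hf hA)), ← hsection]; rfl
    _ ≤ m * μ (B ∩ f ⁻¹' A) := hQB A hA
    _ = ∫⁻ x, (exposed f B B G q).indicator (fun _ => m) (Function.update ω q x) ∂μ := by
        rw [← lintegral_indicator_const (hB.inter (hf hA)), ← hsection]; rfl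

lemma measure_pi_exposed_le (hf : Measurable f) (hQ : MeasurableSet Q) (hB : MeasurableSet B)
    {m : ENNReal} (hQB : ∀ A, MeasurableSet A → μ (Q ∩ f ⁻¹' A) ≤ m * μ (B ∩ f ⁻¹' A))
    (G : Finset ι) (q : ι) :
    Measure.pi (fun _ => μ) (exposed f Q B G q) ≤ m / G.card := by
  calc Measure.pi (fun _ => μ) (exposed f Q B G q)
      ≤ m * Measure.pi (fun _ => μ) (exposed f B B G q) :=
        measure_pi_exposed_le_mul hf hQ hB hQB G q
    _ ≤ m / G.card := by
        rw [div_eq_mul_inv]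
        gcongr
        rw [ENNReal.le_inv_iff_mul_le, mul_comm]
        exact card_mul_measure_pi_exposed_le_one hf hB G q

end Exposure

section CoverNum

variable {d n : ℕ} {κ : Type*} {𝒮 : Finset (Finset (Fin d → ℝ))} {r : Set (Fin d → ℝ)}
  {f : (Fin d → ℝ) → ℝ} {ω : Fin n → Fin d → ℝ}

lemma coverNum_congr {P : Finset (Fin d → ℝ)} {r' : Set (Fin d → ℝ)} (h : r ∩ P = r' ∩ P) :
    coverNum 𝒮 P r = coverNum 𝒮 P r' := by
  simp only [coverNum, h]

lemma coverNum_le_card {P : Finset (Fin d → ℝ)} (C : Finset κ) (s : κ → Finset (Fin d → ℝ))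
    (hs : ∀ c ∈ C, s c ∈ 𝒮) (hcover : ⋃ c ∈ C, (s c : Set (Fin d → ℝ)) = r ∩ P) :
    coverNum 𝒮 P r ≤ C.card := by
  refine sInf_le ⟨C.card, rfl, fun i => s (C.equivFin.symm i), fun i => hs _ (Subtype.prop _), ?_⟩
  rw [← hcover, ← Set.iUnion_subtype (· ∈ C) fun c => (s c : Set (Fin d → ℝ))]
  exact C.equivFin.symm.surjective.iUnion_comp fun c : C => (s c : Set (Fin d → ℝ))

lemma coverNum_le_card_add_card_uncovered (hsingle : ∀ i, {ω i} ∈ 𝒮)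
    (hsub : ∀ s ∈ 𝒮, s ⊆ Finset.univ.image ω) (D : Finset κ) (s : κ → Finset (Fin d → ℝ))
    (hs : ∀ c ∈ D, s c ∈ 𝒮) (hsr : ∀ c ∈ D, ↑(s c) ⊆ r) (U : Finset (Fin n))
    (hU : ∀ q, q ∈ U ↔ ω q ∈ r ∧ ∀ c ∈ D, ω q ∉ s c) :
    coverNum 𝒮 (Finset.univ.image ω) r ≤ D.card + U.card := by
  rw [← Nat.cast_add, ← Finset.card_disjSum]
  refine coverNum_le_card (D.disjSum U) (Sum.elim s fun q => {ω q}) ?_ ?_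
  · rintro (c | q) h
    · exact hs c (by simpa using h)
    · exact hsingle q
  · ext x
    simp only [Set.mem_iUnion, Sum.exists, Finset.inl_mem_disjSum, Finset.inr_mem_disjSum,
      Sum.elim_inl, Sum.elim_inr, Finset.mem_singleton, exists_prop, SetLike.mem_coe,
      Set.mem_inter_iff, Finset.mem_image, Finset.mem_univ, true_and]
    constructor
    · rintro (⟨c, hc, hx⟩ | ⟨q, hq, rfl⟩)
      · exact ⟨hsr c hc hx, by simpa using hsub _ (hs c hc) hx⟩
      · exact ⟨((hU q).1 hq).1, q, rfl⟩
    · rintro ⟨hxr, q, rfl⟩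
      by_cases hq : ∃ c ∈ D, ω q ∈ s c
      · exact .inl hq
      · exact .inr ⟨q, (hU q).2 ⟨hxr, by simpa using hq⟩, rfl⟩

lemma exists_mem_forall_notMem_exposed {Q B : Set (Fin d → ℝ)} {G : Finset (Fin n)}
    (hcapture : ∀ i ∈ G, ω i ∈ B → ∃ s ∈ 𝒮, ↑s ⊆ r ∧
      ∀ q, ω q ∈ Q → f (ω q) ≤ f (ω i) → ω q ∈ s)
    (hGB : ∃ i ∈ G, ω i ∈ B) :
    ∃ s ∈ 𝒮, ↑s ⊆ r ∧ ∀ q, ω q ∈ Q → ω ∉ exposed f Q B G q → ω q ∈ s := by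
  classical
  obtain ⟨i, hi, hmax⟩ := (G.filter fun i => ω i ∈ B).exists_max_image (f ∘ ω)
    (by simpa [Finset.Nonempty] using hGB)
  rw [Finset.mem_filter] at hi
  obtain ⟨s, hs, hsr, hsQ⟩ := hcapture i hi.1 hi.2
  refine ⟨s, hs, hsr, fun q hq hexp => hsQ q hq ?_⟩
  obtain ⟨l, hl, -, hlB, hql⟩ : ∃ l ∈ G, l ≠ q ∧ ω l ∈ B ∧ f (ω q) ≤ f (ω l) := by
    simpa [exposed, hq] using hexp
  exact hql.trans (hmax l (by simp [hl, hlB]))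

lemma coverNum_le_card_add_sum_exposed (hsingle : ∀ i, {ω i} ∈ 𝒮)
    (hsub : ∀ s ∈ 𝒮, s ⊆ Finset.univ.image ω) (C : Finset κ) {Q B : κ → Set (Fin d → ℝ)}
    {G : κ → Finset (Fin n)}
    (hcapture : ∀ c ∈ C, ∀ i ∈ G c, ω i ∈ B c → ∃ s ∈ 𝒮, ↑s ⊆ r ∧
      ∀ q, ω q ∈ Q c → f (ω q) ≤ f (ω i) → ω q ∈ s) :
    coverNum 𝒮 (Finset.univ.image ω) r ≤ C.card + ∑ q,
      (∑ c ∈ C, (exposed f (Q c) (B c) (G c) q).indicator 1 ω +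
        (r \ ⋃ c ∈ C, Q c).indicator 1 (ω q)) := by
  classical
  set D := C.filter fun c => ∃ i ∈ G c, ω i ∈ B c
  have hDC : D ⊆ C := Finset.filter_subset _ _
  choose! s hs hsr hsQ using fun c (hc : c ∈ D) =>
    exists_mem_forall_notMem_exposed (hcapture c (hDC hc)) (Finset.mem_filter.1 hc).2
  set U := Finset.univ.filter fun q => ω q ∈ r ∧ ∀ c ∈ D, ω q ∉ s c with hU
  have hexposed : ∀ q ∈ U, ∀ c ∈ C, ω q ∈ Q c → ω ∈ exposed f (Q c) (B c) (G c) q := by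
    intro q hq c hc hqc
    by_cases hcD : c ∈ D
    · by_contra hexp
      exact (Finset.mem_filter.1 hq).2.2 c hcD (hsQ c hcD q hqc hexp)
    · refine ⟨hqc, fun i hi _ hiB => absurd ?_ hcD⟩
      exact Finset.mem_filter.2 ⟨hc, i, hi, hiB⟩
  refine (coverNum_le_card_add_card_uncovered hsingle hsub D s hs hsr U (by simp [hU])).trans ?_
  gcongr
  rw [Finset.cast_card]
  refine (Finset.sum_le_sum fun q hq => ?_).trans
    (Finset.sum_le_sum_of_subset U.subset_univ)
  by_cases hqC : ∃ c ∈ C, ω q ∈ Q c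
  · obtain ⟨c, hc, hqc⟩ := hqC
    calc (1 : ENNReal) = (exposed f (Q c) (B c) (G c) q).indicator 1 ω := by
          simp [hexposed q hq c hc hqc]
      _ ≤ ∑ c ∈ C, (exposed f (Q c) (B c) (G c) q).indicator 1 ω :=
          Finset.single_le_sum (f := fun c => (exposed f (Q c) (B c) (G c) q).indicator 1 ω)
            (fun _ _ => zero_le) hc
      _ ≤ _ := le_self_add
  · have hq' : ω q ∈ r \ ⋃ c ∈ C, Q c := ⟨(Finset.mem_filter.1 hq).2.1, by simpa using hqC⟩
    simp [hq']

end CoverNum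

theorem lintegral_coverNum_le {d n : ℕ} {κ : Type*} {μ : Measure (Fin d → ℝ)}
    [IsProbabilityMeasure μ] {𝒮 : (Fin n → Fin d → ℝ) → Finset (Finset (Fin d → ℝ))}
    {r : Set (Fin d → ℝ)} {f : (Fin d → ℝ) → ℝ}
    (hsingle : ∀ ω i, {ω i} ∈ 𝒮 ω) (hsub : ∀ ω, ∀ s ∈ 𝒮 ω, s ⊆ Finset.univ.image ω)
    (hf : Measurable f) (hr : MeasurableSet r) (C : Finset κ) {Q B : κ → Set (Fin d → ℝ)}
    {G : κ → Finset (Fin n)}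
    (hQ : ∀ c, MeasurableSet (Q c)) (hB : ∀ c, MeasurableSet (B c)) {m : ENNReal}
    (hQB : ∀ c ∈ C, ∀ A, MeasurableSet A → μ (Q c ∩ f ⁻¹' A) ≤ m * μ (B c ∩ f ⁻¹' A))
    (hcapture : ∀ᵐ ω ∂Measure.pi fun _ : Fin n => μ,
      ∀ c ∈ C, ∀ i ∈ G c, ω i ∈ B c → ∃ s ∈ 𝒮 ω, ↑s ⊆ r ∧
        ∀ q, ω q ∈ Q c → f (ω q) ≤ f (ω i) → ω q ∈ s) :
    ∫⁻ ω, coverNum (𝒮 ω) (Finset.univ.image ω) r ∂Measure.pi (fun _ : Fin n => μ) ≤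
      C.card + n * (∑ c ∈ C, m / (G c).card + μ (r \ ⋃ c ∈ C, Q c)) := by
  set R := r \ ⋃ c ∈ C, Q c
  have hR : MeasurableSet R := hr.diff (C.measurableSet_biUnion fun c _ => hQ c)
  have hexp (c : κ) (q : Fin n) := measurableSet_exposed hf (hQ c) (hB c) (G c) q
  have hexp_ind (c : κ) (q : Fin n) :
      Measurable ((exposed f (Q c) (B c) (G c) q).indicator (1 : (Fin n → Fin d → ℝ) → ENNReal)) :=
    measurable_one.indicator (hexp c q)
  let uncaptured (q : Fin n) (ω : Fin n → Fin d → ℝ) : ENNReal :=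
    ∑ c ∈ C, (exposed f (Q c) (B c) (G c) q).indicator 1 ω + R.indicator 1 (ω q)
  have huncaptured_meas (q : Fin n) : Measurable (uncaptured q) :=
    (Finset.measurable_fun_sum C fun c _ => hexp_ind c q).add <|
      (measurable_one.indicator hR).comp (measurable_pi_apply q)
  have huncaptured (q : Fin n) : ∫⁻ ω, uncaptured q ω ∂Measure.pi (fun _ : Fin n => μ) ≤
      ∑ c ∈ C, m / (G c).card + μ R := by
    rw [lintegral_add_left (Finset.measurable_fun_sum C fun c _ => hexp_ind c q),
      lintegral_finsetSum _ fun c _ => hexp_ind c q,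
      (measurePreserving_eval (fun _ : Fin n => μ) q).lintegral_comp
        (measurable_one.indicator hR), lintegral_indicator_one hR]
    gcongr with c hc
    rw [lintegral_indicator_one (hexp c q)]
    exact measure_pi_exposed_le hf (hQ c) (hB c) (hQB c hc) (G c) q
  calc ∫⁻ ω, coverNum (𝒮 ω) (Finset.univ.image ω) r ∂Measure.pi (fun _ : Fin n => μ)
      ≤ ∫⁻ ω, C.card + ∑ q, uncaptured q ω ∂Measure.pi (fun _ : Fin n => μ) :=
        lintegral_mono_ae <| hcapture.mono fun ω hω =>
          coverNum_le_card_add_sum_exposed (hsingle ω) (hsub ω) C hω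
    _ = C.card + ∑ q, ∫⁻ ω, uncaptured q ω ∂Measure.pi (fun _ : Fin n => μ) := by
        rw [lintegral_add_left measurable_const, lintegral_const, measure_univ, mul_one,
          lintegral_finsetSum _ fun q _ => huncaptured_meas q]
    _ ≤ C.card + ∑ _q : Fin n, (∑ c ∈ C, m / (G c).card + μ R) := by
        gcongr
        exact huncaptured _
    _ = C.card + n * (∑ c ∈ C, m / (G c).card + μ R) := by
        rw [Finset.sum_const, Finset.card_univ, Fintype.card_fin, nsmul_eq_mul]

section UniformCube

/-- The uniform distribution on `[0,1]`, the coordinate marginal of `uniformCube`. -/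
noncomputable abbrev uniformInterval : Measure ℝ := volume.restrict (Set.Icc 0 1)

instance : IsProbabilityMeasure uniformInterval := ⟨by simp⟩

lemma uniformCube_eq_pi (d : ℕ) : uniformCube d = Measure.pi fun _ => uniformInterval := by
  rw [uniformCube, volume_pi, Measure.restrict_pi_pi]

instance (d : ℕ) : IsProbabilityMeasure (uniformCube d) := by
  rw [uniformCube_eq_pi]
  infer_instance

lemma uniformCube_eval_preimage_le {d : ℕ} (j : Fin d) {S : Set ℝ} (hS : MeasurableSet S) :
    uniformCube d (Function.eval j ⁻¹' S) ≤ volume S := by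
  rw [uniformCube_eq_pi, (measurePreserving_eval (fun _ => uniformInterval) j).measure_preimage
    hS.nullMeasurableSet]
  exact Measure.restrict_apply_le _ _

lemma ae_forall_mem_Icc {ι : Type*} [Fintype ι] (d : ℕ) :
    ∀ᵐ ω ∂Measure.pi fun _ : ι => uniformCube d, ∀ i, ω i ∈ Set.Icc 0 1 := by
  have hmem : ∀ᵐ x ∂uniformCube d, x ∈ Set.Icc 0 1 := by
    rw [uniformCube, Set.pi_univ_Icc]
    exact ae_restrict_mem measurableSet_Icc
  exact Filter.eventually_all.2 fun i =>
    (measurePreserving_eval (fun _ => uniformCube d) i).quasiMeasurePreserving.ae hmem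

variable {e : ℕ}

/-- The product of sets `S j` in the first `e` coordinates with a set `J` in the last one, which
plays the role of a height. -/
def cylinder (S : Fin e → Set ℝ) (J : Set ℝ) : Set (Fin (e + 1) → ℝ) :=
  {x | (∀ j : Fin e, x j.castSucc ∈ S j) ∧ x (Fin.last e) ∈ J}

lemma cylinder_eq_pi (S : Fin e → Set ℝ) (J : Set ℝ) :
    cylinder S J = Set.univ.pi (Fin.snoc S J : Fin (e + 1) → Set ℝ) := by
  ext x
  simp [cylinder, Fin.forall_fin_succ']

lemma cylinder_inter_preimage (S : Fin e → Set ℝ) (J A : Set ℝ) :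
    cylinder S J ∩ Function.eval (Fin.last e) ⁻¹' A = cylinder S (J ∩ A) :=
  Set.ext fun _ => and_assoc

lemma measurableSet_cylinder {S : Fin e → Set ℝ} {J : Set ℝ} (hS : ∀ j, MeasurableSet (S j))
    (hJ : MeasurableSet J) : MeasurableSet (cylinder S J) := by
  rw [cylinder_eq_pi]
  refine .univ_pi fun j => ?_
  cases j using Fin.lastCases with
  | last => simpa using hJ
  | cast j => simpa using hS j

lemma uniformCube_cylinder (S : Fin e → Set ℝ) (J : Set ℝ) :
    uniformCube (e + 1) (cylinder S J) =
      (∏ j, uniformInterval (S j)) * uniformInterval J := by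
  rw [uniformCube_eq_pi, cylinder_eq_pi, Measure.pi_pi, Fin.prod_univ_castSucc]
  simp only [Fin.snoc_castSucc, Fin.snoc_last]

lemma uniformCube_cylinder_inter_le {S S' : Fin e → Set ℝ} {m : ENNReal}
    (hSS' : ∀ j, uniformInterval (S j) ≤ m * uniformInterval (S' j)) (J A : Set ℝ) :
    uniformCube (e + 1) (cylinder S J ∩ Function.eval (Fin.last e) ⁻¹' A) ≤
      m ^ e * uniformCube (e + 1) (cylinder S' J ∩ Function.eval (Fin.last e) ⁻¹' A) := by
  rw [cylinder_inter_preimage, cylinder_inter_preimage, uniformCube_cylinder,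
    uniformCube_cylinder, ← mul_assoc]
  gcongr
  calc ∏ j, uniformInterval (S j) ≤ ∏ j, m * uniformInterval (S' j) :=
        Finset.prod_le_prod' fun j _ => hSS' j
    _ = m ^ e * ∏ j, uniformInterval (S' j) := by simp [Finset.prod_mul_distrib]

end UniformCube

lemma exists_inter_Icc_eq_Icc {d k : ℕ} {r : Set (Fin d → ℝ)} (hr : DPlusKSided d k r) :
    ∃ a b : Fin d → ℝ, 0 ≤ a ∧ b ≤ 1 ∧ (∀ j : Fin d, k ≤ j → a j = 0) ∧
      r ∩ Set.Icc 0 1 = Set.Icc a b := by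
  obtain ⟨a, b, rfl⟩ := hr
  refine ⟨fun j => if (j : ℕ) < k then max (a j) 0 else 0, fun j => min (b j) 1, fun j => ?_,
    fun j => min_le_right _ _, fun j hj => if_neg hj.not_gt, ?_⟩
  · dsimp only [Pi.zero_apply]
    split_ifs <;> simp
  · rw [← Set.pi_univ_Icc, ← Set.pi_univ_Icc, ← Set.pi_inter_distrib]
    congr! with j
    ext x
    split_ifs <;> simp <;> tauto

section DyadicScheme

/-- The `t`-th dyadic strip of scale `h` along the lower (`s = true`) or upper (`s = false`)
endpoint of `[a,b]`: the points at distance between `h / 2 ^ (t + 1)` and `h / 2 ^ t` from it. -/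
def strip (s : Bool) (a b h : ℝ) (t : ℕ) : Set ℝ :=
  bif s then Set.Ioc (a + h / 2 ^ (t + 1)) (a + h / 2 ^ t)
  else Set.Ico (b - h / 2 ^ t) (b - h / 2 ^ (t + 1))

/-- The interval of length `ρ` with endpoint `p` pointing away from the side `s`: upwards for the
lower side (`s = true`), downwards for the upper one. -/
def flank (s : Bool) (ρ p : ℝ) : Set ℝ :=
  bif s then Set.Icc p (p + ρ) else Set.Icc (p - ρ) p

/-- The endpoints of a coordinate interval along which strips are taken: both of them if the
interval is bounded on two sides, only the upper one otherwise. -/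
def sides (two : Bool) : Finset Bool := if two then Finset.univ else {false}

/-- The levels `ℓ` for which flanks of length `2 ^ (-ℓ)` are used in a coordinate. -/
def levels (T : ℕ) (two : Bool) : Finset ℕ := Finset.range (if two then 2 * T else 1)

variable {a b h : ℝ} {s : Bool} {n t T : ℕ}

lemma measurableSet_strip : MeasurableSet (strip s a b h t) := by
  cases s
  exacts [measurableSet_Ico, measurableSet_Ioc]

lemma volume_strip : volume (strip s a b h t) = ENNReal.ofReal (h / 2 ^ (t + 1)) := by
  cases s <;> simp only [strip, cond_true, cond_false, Real.volume_Ioc, Real.volume_Ico] <;>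
    congr 1 <;> ring

lemma strip_subset_Icc (hh : 0 ≤ h) (hab : h ≤ b - a) : strip s a b h t ⊆ Set.Icc a b := by
  have hsmall : h / 2 ^ t ≤ h := div_le_self hh (one_le_pow₀ one_le_two)
  have hpos : 0 ≤ h / 2 ^ (t + 1) := by positivity
  cases s
  · exact fun x hx => ⟨by linarith [hx.1], by linarith [hx.2]⟩
  · exact fun x hx => ⟨by linarith [hx.1], by linarith [hx.2]⟩

lemma uniformInterval_strip_le (ha : 0 ≤ a) (hb : b ≤ 1) (hh : 0 ≤ h) (hab : h ≤ b - a) :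
    uniformInterval (strip s a b h t) ≤ 2 * uniformInterval (strip s a b h (t + 1)) := by
  have hsub : strip s a b h (t + 1) ⊆ Set.Icc 0 1 :=
    (strip_subset_Icc hh hab).trans (Set.Icc_subset_Icc ha hb)
  calc uniformInterval (strip s a b h t) ≤ volume (strip s a b h t) :=
        Measure.restrict_apply_le _ _
    _ = 2 * uniformInterval (strip s a b h (t + 1)) := by
        rw [Measure.restrict_eq_self _ hsub, volume_strip, volume_strip,
          ← ENNReal.ofReal_ofNat 2, ← ENNReal.ofReal_mul zero_le_two]
        congr 1
        ring

lemma flank_subset_Icc {ρ p : ℝ} (hab : 2 * h ≤ b - a) (hh : 0 ≤ h) (hρ : ρ ≤ 3 / 2 * h)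
    (hp : p ∈ strip s a b h (t + 1)) : flank s ρ p ⊆ Set.Icc a b := by
  have hpos : 0 ≤ h / 2 ^ (t + 1 + 1) := by positivity
  have hsmall : h / 2 ^ t ≤ h := div_le_self hh (one_le_pow₀ one_le_two)
  have hhalf : h / 2 ^ (t + 1) = h / 2 ^ t / 2 := by ring
  cases s
  · exact fun x hx => ⟨by linarith [hx.1, hp.1], by linarith [hx.2, hp.2]⟩
  · exact fun x hx => ⟨by linarith [hx.1, hp.1], by linarith [hx.2, hp.2]⟩

lemma strip_subset_flank {ρ p : ℝ} (hρ : 3 / 4 * (h / 2 ^ t) ≤ ρ)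
    (hp : p ∈ strip s a b h (t + 1)) : strip s a b h t ⊆ flank s ρ p := by
  have hquarter : h / 2 ^ (t + 1 + 1) = h / 2 ^ t / 4 := by ring
  cases s
  · exact fun x hx => ⟨by linarith [hx.1, hp.2], by linarith [hx.2, hp.1]⟩
  · exact fun x hx => ⟨by linarith [hx.1, hp.2], by linarith [hx.2, hp.1]⟩

lemma lt_of_one_div_le_mul_half_pow {c : ℝ} (hT : n < 2 ^ T) (hn : 0 < n) (hc : c ≤ 1)
    (h : 1 / n ≤ c * (1 / 2) ^ t) : t < T := by
  have hlt : (1 / 2 : ℝ) ^ T < (1 / 2) ^ t :=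
    calc (1 / 2 : ℝ) ^ T = 1 / 2 ^ T := one_div_pow 2 T
      _ < 1 / n := by gcongr; exact_mod_cast hT
      _ ≤ c * (1 / 2) ^ t := h
      _ ≤ (1 / 2) ^ t := mul_le_of_le_one_left (by positivity) hc
  exact (pow_lt_pow_iff_right_of_lt_one₀ (one_half_pos (α := ℝ)) one_half_lt_one).1 hlt

lemma exists_lt_div_two_pow {δ : ℝ} (hn : 0 < n) (hT : n < 2 ^ T) (hδ : 1 / n < δ) (hδh : δ ≤ h)
    (hh : h ≤ 1) : ∃ t < T, h / 2 ^ (t + 1) < δ ∧ δ ≤ h / 2 ^ t := by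
  have hδ0 : 0 < δ := lt_trans (by positivity) hδ
  have hh0 : 0 < h := hδ0.trans_le hδh
  obtain ⟨t, hlt, hle⟩ := exists_nat_pow_near_of_lt_one (div_pos hδ0 hh0)
    ((div_le_one hh0).2 hδh) one_half_pos one_half_lt_one
  rw [div_le_iff₀' hh0] at hle
  rw [lt_div_iff₀' hh0] at hlt
  refine ⟨t, lt_of_one_div_le_mul_half_pow hT hn hh (hδ.le.trans hle), ?_, ?_⟩
  · rwa [one_div_pow, mul_one_div] at hlt
  · rwa [one_div_pow, mul_one_div] at hle

lemma exists_half_pow_near (hn : 0 < n) (hT : n < 2 ^ T) (hh : 1 / n ≤ h) (hh2 : h ≤ 1 / 2) :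
    ∃ w ≤ T, (1 / 2) ^ w ≤ 3 / 2 * h ∧ 3 / 4 * h ≤ (1 / 2) ^ w := by
  have hh0 : 0 < h := lt_of_lt_of_le (by positivity) hh
  obtain ⟨v, hlt, hle⟩ := exists_nat_pow_near_of_lt_one (x := 3 / 2 * h) (by positivity)
    (by linarith) one_half_pos one_half_lt_one
  exact ⟨v + 1, lt_of_one_div_le_mul_half_pow hT hn le_rfl (by linarith), hlt.le,
    by rw [pow_succ]; linarith⟩

/-- A scheme for capturing the points of `[a,b]`: all points at distance more than `1 / n` from the
endpoints lie in one of the first `T` strips of scale `h`, and for every level in the window `W t`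
the flank of a point `p` of strip `t + 1` contains strip `t` without leaving `[a,b]`. Flanks are
only controlled on the nonnegative half-line, where the point set lives. -/
structure IsDyadicScheme (a b : ℝ) (n T : ℕ) (two : Bool) (h : ℝ) (W : ℕ → Finset ℕ) : Prop where
  scale_nonneg : 0 ≤ h
  scale_le : h ≤ b - a
  window_subset : ∀ t < T, W t ⊆ levels T two
  card_window : ∀ t, (W t).card = if two then t + 1 else 1
  flank_subset : ∀ s ∈ sides two, ∀ t, ∀ ℓ ∈ W t, ∀ p ∈ strip s a b h (t + 1),
    flank s ((1 / 2) ^ ℓ) p ∩ Set.Ici 0 ⊆ Set.Icc a b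
  strip_subset_flank : ∀ s ∈ sides two, ∀ t, ∀ ℓ ∈ W t, ∀ p ∈ strip s a b h (t + 1),
    strip s a b h t ⊆ flank s ((1 / 2) ^ ℓ) p
  exists_mem_strip : ∀ x, a + 1 / n < x → x < b - 1 / n →
    ∃ s ∈ sides two, ∃ t < T, x ∈ strip s a b h t

lemma isDyadicScheme_false (hb : 0 ≤ b) (hb1 : b ≤ 1) (hn : 0 < n) (hT : n < 2 ^ T) :
    IsDyadicScheme 0 b n T false b fun _ => {0} where
  scale_nonneg := hb
  scale_le := by simp
  window_subset _ _ := by simp [levels]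
  card_window _ := by simp
  flank_subset s hs t ℓ _ p hp := by
    obtain rfl : s = false := by simpa [sides] using hs
    have hdist : 0 ≤ b / 2 ^ (t + 1 + 1) := by positivity
    exact fun x hx => ⟨hx.2, by linarith [hx.1.2, hp.2]⟩
  strip_subset_flank s _ t ℓ hℓ p hp := by
    obtain rfl : ℓ = 0 := by simpa using hℓ
    have hsmall : b / 2 ^ t ≤ b := div_le_self hb (one_le_pow₀ one_le_two)
    exact strip_subset_flank (by linarith) hp
  exists_mem_strip x hx0 hxb := by
    have hn' : 0 < 1 / (n : ℝ) := by positivity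
    obtain ⟨t, ht, hlt, hle⟩ := exists_lt_div_two_pow hn hT (δ := b - x) (h := b)
      (by linarith) (by linarith) hb1
    exact ⟨false, by simp [sides], t, ht, by linarith, by linarith⟩

lemma exists_isDyadicScheme_true (ha : 0 ≤ a) (hb : b ≤ 1) (hab : 2 / n ≤ b - a) (hn : 0 < n)
    (hT : n < 2 ^ T) : ∃ h W, IsDyadicScheme a b n T true h W := by
  obtain ⟨h, rfl⟩ : ∃ h, b = a + 2 * h := ⟨(b - a) / 2, by ring⟩
  have hn' : 0 < 1 / (n : ℝ) := by positivity
  have hh : 1 / n ≤ h := by linarith [two_mul (1 / (n : ℝ)), mul_one_div 2 (n : ℝ)]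
  obtain ⟨w, hwT, hw_le, hle_w⟩ := exists_half_pow_near hn hT hh (by linarith)
  refine ⟨h, fun t => Finset.Icc w (w + t), by linarith, by linarith, fun t ht ℓ hℓ => ?_,
    fun t => ?_, fun s _ t ℓ hℓ p hp => ?_, fun s _ t ℓ hℓ p hp => ?_, fun x hxa hxb => ?_⟩
  · simp only [levels, Finset.mem_range, Finset.mem_Icc, if_true] at hℓ ⊢
    omega
  · simp only [Nat.card_Icc, if_true]
    omega
  · refine Set.inter_subset_left.trans (flank_subset_Icc (by linarith) (by linarith) ?_ hp)
    exact (pow_le_pow_of_le_one (by simp) (by norm_num) (Finset.mem_Icc.1 hℓ).1).trans hw_le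
  · refine strip_subset_flank ?_ hp
    calc 3 / 4 * (h / 2 ^ t) = 3 / 4 * h * (1 / 2) ^ t := by rw [one_div_pow]; ring
      _ ≤ (1 / 2) ^ w * (1 / 2) ^ t := by gcongr
      _ = (1 / 2) ^ (w + t) := (pow_add _ _ _).symm
      _ ≤ (1 / 2) ^ ℓ := pow_le_pow_of_le_one (by simp) (by norm_num) (Finset.mem_Icc.1 hℓ).2
  · rcases le_total x (a + h) with hxh | hxh
    · obtain ⟨t, ht, hlt, hle⟩ := exists_lt_div_two_pow hn hT (δ := x - a) (h := h)
        (by linarith) (by linarith) (by linarith)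
      exact ⟨true, by simp [sides], t, ht, by linarith, by linarith⟩
    · obtain ⟨t, ht, hlt, hle⟩ := exists_lt_div_two_pow hn hT (δ := a + 2 * h - x) (h := h)
        (by linarith) (by linarith) (by linarith)
      exact ⟨false, by simp [sides], t, ht, by linarith, by linarith⟩

end DyadicScheme

section CellFamily

variable {e n : ℕ}

/-- The box spanned by `p` and a point of the flank of length `2 ^ (-ℓ j)` on the side `σ j` in each
coordinate `j` but the last, consisting of points not higher than `p`. -/
def cell (ℓ : Fin e → ℕ) (σ : Fin e → Bool) (p : Fin (e + 1) → ℝ) : Set (Fin (e + 1) → ℝ) :=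
  cylinder (fun j => flank (σ j) ((1 / 2) ^ ℓ j) (p j.castSucc)) (Set.Iic (p (Fin.last e)))

lemma self_mem_cell (ℓ : Fin e → ℕ) (σ : Fin e → Bool) (p : Fin (e + 1) → ℝ) :
    p ∈ cell ℓ σ p := by
  refine ⟨fun j => ?_, Set.self_mem_Iic⟩
  cases hσ : σ j <;> simp [flank, hσ]

open scoped Classical in
/-- The family `𝒮` of the theorem: all singletons, and for each point `ω i` the sets of points lying
in one of the `2 ^ e` cells of that point at its level vector `lev i`. -/
noncomputable def cellFamily (lev : Fin n → Fin e → ℕ) (ω : Fin n → Fin (e + 1) → ℝ) :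
    Finset (Finset (Fin (e + 1) → ℝ)) :=
  Finset.univ.image (fun i => {ω i}) ∪
    Finset.univ.image fun c : Fin n × (Fin e → Bool) =>
      (Finset.univ.image ω).filter (· ∈ cell (lev c.1) c.2 (ω c.1))

lemma card_cellFamily_le (lev : Fin n → Fin e → ℕ) (ω : Fin n → Fin (e + 1) → ℝ) :
    (cellFamily lev ω).card ≤ (1 + 2 ^ e) * n := by
  classical
  calc (cellFamily lev ω).card
      ≤ Fintype.card (Fin n) + Fintype.card (Fin n × (Fin e → Bool)) :=
        (Finset.card_union_le _ _).trans
          (Nat.add_le_add Finset.card_image_le Finset.card_image_le)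
    _ = (1 + 2 ^ e) * n := by simp; ring

lemma singleton_mem_cellFamily (lev : Fin n → Fin e → ℕ) (ω : Fin n → Fin (e + 1) → ℝ)
    (i : Fin n) : {ω i} ∈ cellFamily lev ω :=
  Finset.mem_union_left _ (Finset.mem_image_of_mem _ (Finset.mem_univ i))

lemma nonempty_and_subset_of_mem_cellFamily {lev : Fin n → Fin e → ℕ}
    {ω : Fin n → Fin (e + 1) → ℝ} {s : Finset (Fin (e + 1) → ℝ)} (hs : s ∈ cellFamily lev ω) :
    s.Nonempty ∧ s ⊆ Finset.univ.image ω := by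
  classical
  rw [cellFamily, Finset.mem_union, Finset.mem_image, Finset.mem_image] at hs
  obtain ⟨i, -, rfl⟩ | ⟨⟨i, σ⟩, -, rfl⟩ := hs
  · simp
  · exact ⟨⟨ω i, by simp [self_mem_cell]⟩, Finset.filter_subset _ _⟩

/-- The points below the upper face of the box `[a,b]` that lie in the `t j`-th strip along its side
`σ j` in each coordinate `j` but the last. -/
def stripBox (a b : Fin (e + 1) → ℝ) (h : Fin e → ℝ) (σ : Fin e → Bool) (t : Fin e → ℕ) :
    Set (Fin (e + 1) → ℝ) :=
  cylinder (fun j => strip (σ j) (a j.castSucc) (b j.castSucc) (h j) (t j))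
    (Set.Iic (b (Fin.last e)))

lemma measurableSet_stripBox {a b : Fin (e + 1) → ℝ} {h : Fin e → ℝ} {σ : Fin e → Bool}
    {t : Fin e → ℕ} : MeasurableSet (stripBox a b h σ t) :=
  measurableSet_cylinder (fun _ => measurableSet_strip) measurableSet_Iic

variable {a b : Fin (e + 1) → ℝ} {h : Fin e → ℝ} {T : ℕ} {two : Fin e → Bool}
  {W : Fin e → ℕ → Finset ℕ}

lemma uniformCube_stripBox_inter_le (ha : 0 ≤ a) (hb : b ≤ 1) (hh : ∀ j, 0 ≤ h j)
    (hab : ∀ j : Fin e, h j ≤ b j.castSucc - a j.castSucc) (σ : Fin e → Bool) (t : Fin e → ℕ)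
    (A : Set ℝ) :
    uniformCube (e + 1) (stripBox a b h σ t ∩ Function.eval (Fin.last e) ⁻¹' A) ≤
      2 ^ e * uniformCube (e + 1)
        (stripBox a b h σ (fun j => t j + 1) ∩ Function.eval (Fin.last e) ⁻¹' A) :=
  uniformCube_cylinder_inter_le
    (fun j => uniformInterval_strip_le (ha _) (hb _) (hh j) (hab j)) _ A

lemma exists_mem_cellFamily_capturing
    (hscheme : ∀ j : Fin e,
      IsDyadicScheme (a j.castSucc) (b j.castSucc) n T (two j) (h j) (W j))
    (ha : a (Fin.last e) = 0) {lev : Fin n → Fin e → ℕ} {ω : Fin n → Fin (e + 1) → ℝ}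
    (hω : ∀ i, 0 ≤ ω i) {σ : Fin e → Bool} (hσ : ∀ j, σ j ∈ sides (two j)) {t : Fin e → ℕ}
    {i : Fin n} (hlev : ∀ j, lev i j ∈ W j (t j))
    (hi : ω i ∈ stripBox a b h σ fun j => t j + 1) :
    ∃ s ∈ cellFamily lev ω, ↑s ⊆ Set.Icc a b ∧
      ∀ q, ω q ∈ stripBox a b h σ t → ω q (Fin.last e) ≤ ω i (Fin.last e) → ω q ∈ s := by
  classical
  refine ⟨(Finset.univ.image ω).filter (· ∈ cell (lev i) σ (ω i)), ?_, ?_, fun q hq hqi => ?_⟩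
  · exact Finset.mem_union_right _ (Finset.mem_image_of_mem _ (Finset.mem_univ (i, σ)))
  · intro x hx
    obtain ⟨hxω, hflank, hlast⟩ := Finset.mem_filter.1 hx
    obtain ⟨q, -, rfl⟩ := Finset.mem_image.1 hxω
    rw [← Set.pi_univ_Icc]
    intro j _
    cases j using Fin.lastCases with
    | last => exact ⟨ha.trans_le (hω q _), le_trans hlast hi.2⟩
    | cast j =>
      exact (hscheme j).flank_subset _ (hσ j) _ _ (hlev j) _ (hi.1 j) ⟨hflank j, hω q _⟩
  · refine Finset.mem_filter.2 ⟨Finset.mem_image_of_mem ω (Finset.mem_univ q), fun j => ?_, hqi⟩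
    exact (hscheme j).strip_subset_flank _ (hσ j) _ _ (hlev j) _ (hi.1 j) (hq.1 j)

/-- The level vectors distributed among the points. -/
def levelVectors (T : ℕ) (two : Fin e → Bool) : Finset (Fin e → ℕ) :=
  Fintype.piFinset fun j => levels T (two j)

/-- The choices of a side and one of the first `T` strips in every coordinate but the last. -/
def stripIndices (T : ℕ) (two : Fin e → Bool) : Finset (Fin e → Bool × ℕ) :=
  Fintype.piFinset fun j => sides (two j) ×ˢ Finset.range T

lemma Icc_diff_stripBoxes_subset
    (hscheme : ∀ j : Fin e,
      IsDyadicScheme (a j.castSucc) (b j.castSucc) n T (two j) (h j) (W j)) :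
    Set.Icc a b \ ⋃ c ∈ stripIndices T two, stripBox a b h (fun j => (c j).1) (fun j => (c j).2) ⊆
      ⋃ j : Fin e, Function.eval j.castSucc ⁻¹'
        (Set.Icc (a j.castSucc) (a j.castSucc + 1 / n) ∪
          Set.Icc (b j.castSucc - 1 / n) (b j.castSucc)) := by
  rintro x ⟨hx, hxC⟩
  by_contra hedge
  simp only [Set.mem_iUnion, Set.mem_preimage, Function.eval, Set.mem_union, Set.mem_Icc,
    not_exists, not_or, not_and, not_le] at hedge
  choose s hs t ht hst using fun j : Fin e =>
    (hscheme j).exists_mem_strip (x j.castSucc) ((hedge j).1 (hx.1 _))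
      (lt_of_not_ge fun hle => ((hedge j).2 hle).not_ge (hx.2 _))
  refine hxC (Set.mem_biUnion (x := fun j => (s j, t j)) ?_ ⟨hst, hx.2 _⟩)
  simp [stripIndices, hs, ht]

lemma uniformCube_Icc_diff_stripBoxes_le (hscheme : ∀ j : Fin e,
      IsDyadicScheme (a j.castSucc) (b j.castSucc) n T (two j) (h j) (W j)) :
    uniformCube (e + 1) (Set.Icc a b \
      ⋃ c ∈ stripIndices T two, stripBox a b h (fun j => (c j).1) (fun j => (c j).2)) ≤
      ENNReal.ofReal (2 * e / n) := by
  refine (measure_mono (Icc_diff_stripBoxes_subset hscheme)).trans ?_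
  refine (measure_iUnion_fintype_le _ _).trans ?_
  calc ∑ j : Fin e, uniformCube (e + 1) (Function.eval j.castSucc ⁻¹'
        (Set.Icc (a j.castSucc) (a j.castSucc + 1 / n) ∪
          Set.Icc (b j.castSucc - 1 / n) (b j.castSucc)))
      ≤ ∑ j : Fin e, ENNReal.ofReal (2 / n) := Finset.sum_le_sum fun j _ => by
        refine (uniformCube_eval_preimage_le _ (measurableSet_Icc.union measurableSet_Icc)).trans ?_
        refine (measure_union_le _ _).trans_eq ?_
        rw [Real.volume_Icc, Real.volume_Icc, ← ENNReal.ofReal_add (by simp) (by simp)]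
        congr 1
        ring
    _ = ENNReal.ofReal (2 * e / n) := by
        rw [Finset.sum_const, Finset.card_univ, Fintype.card_fin, ← ENNReal.ofReal_nsmul,
          nsmul_eq_mul]
        congr 1
        ring

end CellFamily

lemma exists_equidistributed {α : Type*} [DecidableEq α] {L : Finset α} (hL : L.Nonempty) (n : ℕ) :
    ∃ lev : Fin n → α, ∀ W ⊆ L, n / L.card * W.card ≤ (Finset.univ.filter (lev · ∈ W)).card := by
  have hpos : 0 < L.card := hL.card_pos
  let lev (i : Fin n) : α := L.equivFin.symm ⟨i % L.card, Nat.mod_lt _ hpos⟩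
  have hfiber : ∀ ℓ ∈ L, n / L.card ≤ (Finset.univ.filter (lev · = ℓ)).card := by
    intro ℓ hℓ
    obtain ⟨v, hv⟩ := L.equivFin.symm.surjective ⟨ℓ, hℓ⟩
    have hlt (x : Fin (n / L.card)) : v + L.card * x < n := by
      have hx : L.card * (x + 1) ≤ L.card * (n / L.card) := Nat.mul_le_mul_left _ x.2
      have hn := Nat.mul_div_le n L.card
      have := v.2
      linarith
    have hinj : Function.Injective fun x : Fin (n / L.card) => (⟨v + L.card * x, hlt x⟩ : Fin n) :=
      fun x y hxy => by simpa [hpos.ne', Fin.ext_iff] using hxy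
    rw [← Fintype.card_fin (n / L.card), ← Finset.card_univ, ← Finset.card_map ⟨_, hinj⟩]
    refine Finset.card_le_card fun i hi => ?_
    obtain ⟨x, -, rfl⟩ := Finset.mem_map.1 hi
    simp [lev, Nat.mod_eq_of_lt v.2, hv]
  refine ⟨lev, fun W hW => ?_⟩
  rw [Finset.card_eq_sum_card_fiberwise (f := lev) (t := W) fun i hi => by simpa using hi, mul_comm,
    ← smul_eq_mul]
  refine W.card_nsmul_le_sum _ _ fun ℓ hℓ => (hfiber ℓ (hW hℓ)).trans (Finset.card_le_card ?_)
  intro i hi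
  simp_all

section Summation

variable {e n T : ℕ} {two : Fin e → Bool}

lemma card_levels_le (hT : 0 < T) (two : Bool) : (levels T two).card ≤ 2 * T := by
  cases two
  · simp only [levels, Finset.card_range, Bool.false_eq_true, if_false]
    omega
  · simp [levels]

lemma card_levelVectors_le (hT : 0 < T) (two : Fin e → Bool) :
    (levelVectors T two).card ≤ (2 * T) ^ e := by
  rw [levelVectors, Fintype.card_piFinset]
  exact (Finset.prod_le_prod' fun j _ => card_levels_le hT (two j)).trans_eq (by simp)

lemma levelVectors_nonempty (hT : 0 < T) (two : Fin e → Bool) : (levelVectors T two).Nonempty := by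
  refine ⟨0, Fintype.mem_piFinset.2 fun j => ?_⟩
  cases two j <;> simp [levels, hT]

lemma card_sides_le (two : Bool) : (sides two).card ≤ 2 := by
  cases two <;> simp [sides]

lemma card_stripIndices_le (T : ℕ) (two : Fin e → Bool) :
    (stripIndices T two).card ≤ (2 * T) ^ e := by
  simp only [stripIndices, Fintype.card_piFinset, Finset.card_product, Finset.card_range]
  calc ∏ j, (sides (two j)).card * T ≤ ∏ _j : Fin e, 2 * T :=
        Finset.prod_le_prod' fun j _ => Nat.mul_le_mul_right T (card_sides_le _)
    _ = (2 * T) ^ e := by simp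

lemma sum_one_div_succ_le (T : ℕ) :
    ∑ t ∈ Finset.range T, 1 / ((t : ℝ) + 1) ≤ 1 + Real.log T := by
  simpa [harmonic] using harmonic_le_one_add_log T

/-- The expected number of uncaptured points is controlled by the inverse density of the windows
among all levels, which sums to a harmonic number over the strips along two-sided coordinates. -/
lemma sum_card_levels_div_card_window_le {a b h : ℝ} {two : Bool} {W : ℕ → Finset ℕ}
    (hscheme : IsDyadicScheme a b n T two h W) :
    ∑ c ∈ sides two ×ˢ Finset.range T, ((levels T two).card : ENNReal) / (W c.2).card ≤
      ENNReal.ofReal (T * if two then 4 * (1 + Real.log T) else 1) := by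
  simp only [Finset.sum_product, Finset.sum_const, nsmul_eq_mul, hscheme.card_window]
  cases two
  · simp [sides, levels]
  · have hquotient (t : ℕ) : ((2 * T : ℕ) : ENNReal) / (t + 1 : ℕ) =
        ENNReal.ofReal (2 * T * (1 / ((t : ℝ) + 1))) := by
      rw [← ENNReal.ofReal_natCast, ← ENNReal.ofReal_natCast (t + 1),
        ← ENNReal.ofReal_div_of_pos (by positivity)]
      push_cast
      rw [mul_one_div]
    calc ((sides true).card : ENNReal) *
          ∑ t ∈ Finset.range T, ((levels T true).card : ENNReal) / (if true then t + 1 else 1 : ℕ)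
        = ENNReal.ofReal (2 * ∑ t ∈ Finset.range T, 2 * T * (1 / ((t : ℝ) + 1))) := by
          rw [ENNReal.ofReal_mul zero_le_two,
            ENNReal.ofReal_sum_of_nonneg fun t _ => by positivity]
          simp only [← hquotient]
          simp [sides, levels]
      _ ≤ ENNReal.ofReal (T * if true then 4 * (1 + Real.log T) else 1) := by
          refine ENNReal.ofReal_le_ofReal ?_
          have := mul_le_mul_of_nonneg_left (sum_one_div_succ_le T) (Nat.cast_nonneg T)
          rw [← Finset.mul_sum, if_pos rfl]
          linarith

lemma prod_ofReal_mul_ite {M : ℝ} (hM : 0 ≤ M) (two : Fin e → Bool) :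
    ∏ j, ENNReal.ofReal (T * if two j then M else 1) =
      ENNReal.ofReal (T ^ e * M ^ (Finset.univ.filter (two · = true)).card) := by
  rw [← ENNReal.ofReal_prod_of_nonneg fun j _ => by positivity, Finset.prod_mul_distrib,
    Finset.prod_const, Finset.card_univ, Fintype.card_fin, Finset.prod_ite, Finset.prod_const,
    Finset.prod_const_one, mul_one]

lemma natCast_mul_ofReal_div (hn : 0 < n) (c : ℝ) :
    n * ENNReal.ofReal (c / n) = ENNReal.ofReal c := by
  rw [← ENNReal.ofReal_natCast, ← ENNReal.ofReal_mul n.cast_nonneg,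
    mul_div_cancel₀ c (by positivity)]

lemma natCast_mul_div_le {n l w g : ℕ} (hl : 0 < l) (hln : l ≤ n) (hw : 0 < w)
    (h : n / l * w ≤ g) (m : ENNReal) : n * (m / g) ≤ 2 * m * (l / w) := by
  have hn : n ≤ 2 * l * (n / l) := by
    have hq : 1 ≤ n / l := (Nat.one_le_div_iff hl).2 hln
    nlinarith [Nat.div_add_mod n l, Nat.mod_lt n hl]
  have hnw : n * w ≤ 2 * l * g :=
    calc n * w ≤ 2 * l * (n / l) * w := Nat.mul_le_mul_right w hn
      _ = 2 * l * (n / l * w) := by ring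
      _ ≤ 2 * l * g := Nat.mul_le_mul_left _ h
  have hdiv : (n : ENNReal) / g ≤ 2 * (l / w) := by
    refine ENNReal.div_le_of_le_mul ?_
    rw [← mul_div_assoc, ENNReal.mul_comm_div, mul_div_assoc', ENNReal.le_div_iff_mul_le
      (.inl (by exact_mod_cast hw.ne')) (.inl (ENNReal.natCast_ne_top w))]
    exact_mod_cast hnw
  calc n * (m / g) = m * (n / g) := by simp only [div_eq_mul_inv]; ring
    _ ≤ m * (2 * (l / w)) := by gcongr
    _ = 2 * m * (l / w) := by ring

lemma mul_sum_div_card_le {a b : Fin (e + 1) → ℝ} {h : Fin e → ℝ} {W : Fin e → ℕ → Finset ℕ}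
    (hscheme : ∀ j : Fin e,
      IsDyadicScheme (a j.castSucc) (b j.castSucc) n T (two j) (h j) (W j))
    (hT : 0 < T) (hn : (levelVectors T two).card ≤ n) {lev : Fin n → Fin e → ℕ}
    (hlev : ∀ V ⊆ levelVectors T two,
      n / (levelVectors T two).card * V.card ≤ (Finset.univ.filter (lev · ∈ V)).card) :
    n * ∑ c ∈ stripIndices T two, 2 ^ e /
        ((Finset.univ.filter (lev · ∈ Fintype.piFinset fun j => W j (c j).2)).card : ENNReal) ≤
      2 * 2 ^ e * ∏ j, ENNReal.ofReal (T * if two j then 4 * (1 + Real.log T) else 1) := by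
  have hwindow (j : Fin e) (t : ℕ) : 0 < (W j t).card := by
    rw [(hscheme j).card_window]
    split_ifs <;> simp
  have hclass : ∀ c ∈ stripIndices T two, (n : ENNReal) * (2 ^ e /
        (Finset.univ.filter (lev · ∈ Fintype.piFinset fun j => W j (c j).2)).card) ≤
      2 * 2 ^ e * ∏ j, ((levels T (two j)).card : ENNReal) / (W j (c j).2).card := by
    intro c hc
    have hsub : (Fintype.piFinset fun j => W j (c j).2) ⊆ levelVectors T two := by
      refine Fintype.piFinset_subset _ _ fun j => (hscheme j).window_subset _ ?_
      exact Finset.mem_range.1 (Finset.mem_product.1 (Fintype.mem_piFinset.1 hc j)).2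
    refine (natCast_mul_div_le (levelVectors_nonempty hT two).card_pos hn ?_
      (hlev _ hsub) _).trans_eq ?_
    · rw [Fintype.card_piFinset]
      exact Finset.prod_pos fun j _ => hwindow j _
    · rw [levelVectors, Fintype.card_piFinset, Fintype.card_piFinset, Nat.cast_prod, Nat.cast_prod,
        ENNReal.prod_div_distrib_of_ne_top fun _ _ => ENNReal.natCast_ne_top _]
  calc n * ∑ c ∈ stripIndices T two, 2 ^ e /
        ((Finset.univ.filter (lev · ∈ Fintype.piFinset fun j => W j (c j).2)).card : ENNReal)
      ≤ ∑ c ∈ stripIndices T two,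
          2 * 2 ^ e * ∏ j, ((levels T (two j)).card : ENNReal) / (W j (c j).2).card := by
        rw [Finset.mul_sum]
        exact Finset.sum_le_sum hclass
    _ = 2 * 2 ^ e * ∏ j, ∑ c ∈ sides (two j) ×ˢ Finset.range T,
          ((levels T (two j)).card : ENNReal) / (W j c.2).card := by
        rw [← Finset.mul_sum, stripIndices, Finset.prod_univ_sum]
    _ ≤ 2 * 2 ^ e * ∏ j, ENNReal.ofReal (T * if two j then 4 * (1 + Real.log T) else 1) := by
        gcongr with j
        exact sum_card_levels_div_card_window_le (hscheme j)

end Summation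

section Box

variable {e n T : ℕ} {two : Fin e → Bool} {a b : Fin (e + 1) → ℝ} {lev : Fin n → Fin e → ℕ}

lemma lintegral_coverNum_cellFamily_le_mul_measure (lev : Fin n → Fin e → ℕ)
    {r : Set (Fin (e + 1) → ℝ)} (hr : MeasurableSet r) :
    ∫⁻ ω, coverNum (cellFamily lev ω) (Finset.univ.image ω) r
        ∂Measure.pi (fun _ : Fin n => uniformCube (e + 1)) ≤ n * uniformCube (e + 1) r := by
  simpa using lintegral_coverNum_le (μ := uniformCube (e + 1)) (f := 0)
    (fun ω => singleton_mem_cellFamily lev ω)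
    (fun ω s hs => (nonempty_and_subset_of_mem_cellFamily hs).2) measurable_zero hr
    (∅ : Finset Empty) (Q := fun _ => ∅) (B := fun _ => ∅) (G := fun _ => ∅)
    (fun _ => .empty) (fun _ => .empty) (m := 0) (by simp) (by simp)

lemma mul_uniformCube_Icc_le_of_sub_le (hn : 0 < n) {d : ℕ} {a b : Fin d → ℝ} {j : Fin d} {c : ℝ}
    (hab : b j - a j ≤ c / n) :
    n * uniformCube d (Set.Icc a b) ≤ ENNReal.ofReal c := by
  calc n * uniformCube d (Set.Icc a b)
      ≤ n * uniformCube d (Function.eval j ⁻¹' Set.Icc (a j) (b j)) := by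
        gcongr
        exact fun x hx => ⟨hx.1 j, hx.2 j⟩
    _ ≤ n * ENNReal.ofReal (c / n) := by
        gcongr
        refine (uniformCube_eval_preimage_le j measurableSet_Icc).trans ?_
        rw [Real.volume_Icc]
        gcongr
    _ = ENNReal.ofReal c := natCast_mul_ofReal_div hn c

lemma lintegral_coverNum_cellFamily_le_of_isDyadicScheme (ha : 0 ≤ a) (hb : b ≤ 1)
    (ha0 : a (Fin.last e) = 0) {h : Fin e → ℝ} {W : Fin e → ℕ → Finset ℕ}
    (hscheme : ∀ j : Fin e,
      IsDyadicScheme (a j.castSucc) (b j.castSucc) n T (two j) (h j) (W j))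
    (hn : 0 < n) (hT : 0 < T) (hLn : (levelVectors T two).card ≤ n)
    (hlev : ∀ V ⊆ levelVectors T two,
      n / (levelVectors T two).card * V.card ≤ (Finset.univ.filter (lev · ∈ V)).card) :
    ∫⁻ ω, coverNum (cellFamily lev ω) (Finset.univ.image ω) (Set.Icc a b)
        ∂Measure.pi (fun _ : Fin n => uniformCube (e + 1)) ≤
      (2 * T) ^ e +
        (2 * 2 ^ e * ∏ j, ENNReal.ofReal (T * if two j then 4 * (1 + Real.log T) else 1) +
          ENNReal.ofReal (2 * e)) := by
  refine (lintegral_coverNum_le (singleton_mem_cellFamily lev)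
    (fun ω s hs => (nonempty_and_subset_of_mem_cellFamily hs).2)
    (measurable_pi_apply (Fin.last e)) measurableSet_Icc (stripIndices T two)
    (G := fun c => Finset.univ.filter (lev · ∈ Fintype.piFinset fun j => W j (c j).2))
    (fun c => measurableSet_stripBox (t := fun j => (c j).2)) (fun _ => measurableSet_stripBox)
    (fun c _ A _ => uniformCube_stripBox_inter_le ha hb (fun j => (hscheme j).scale_nonneg)
      (fun j => (hscheme j).scale_le) (fun j => (c j).1) _ A) ?_).trans ?_
  · filter_upwards [ae_forall_mem_Icc (e + 1)] with ω hω c hc i hi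
    exact exists_mem_cellFamily_capturing hscheme ha0 (fun q => (hω q).1)
      (fun j => (Finset.mem_product.1 (Fintype.mem_piFinset.1 hc j)).1)
      (Fintype.mem_piFinset.1 (Finset.mem_filter.1 hi).2)
  · rw [mul_add]
    refine add_le_add (by exact_mod_cast card_stripIndices_le T two)
      (add_le_add (mul_sum_div_card_le hscheme hT hLn hlev) ?_)
    rw [← natCast_mul_ofReal_div hn]
    gcongr
    exact uniformCube_Icc_diff_stripBoxes_le hscheme

lemma exists_isDyadicScheme (ha : 0 ≤ a) (hb : b ≤ 1)
    (ha0 : ∀ j : Fin e, two j = false → a j.castSucc = 0)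
    (hab : ∀ j : Fin e, 2 / n ≤ b j.castSucc - a j.castSucc) (hn : 0 < n) (hT : n < 2 ^ T) :
    ∃ (h : Fin e → ℝ) (W : Fin e → ℕ → Finset ℕ), ∀ j : Fin e,
      IsDyadicScheme (a j.castSucc) (b j.castSucc) n T (two j) (h j) (W j) := by
  choose h W hscheme using fun j : Fin e =>
    show ∃ h W, IsDyadicScheme (a j.castSucc) (b j.castSucc) n T (two j) h W by
      cases hj : two j with
      | true => exact exists_isDyadicScheme_true (ha _) (hb _) (hab j) hn hT
      | false =>
        have h0b : 0 ≤ b j.castSucc :=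
          (ha j.castSucc).trans (sub_nonneg.1 (le_trans (by positivity) (hab j)))
        rw [ha0 j hj]
        exact ⟨_, _, isDyadicScheme_false h0b (hb _) hn hT⟩
  exact ⟨h, W, hscheme⟩

/-- The bound on the expected cover number of a box in `e + 1` dimensions that is two-sided in `k`
of its first `e` coordinates; `t` is the number of strips along each side, and `u` bounds the
harmonic sum over these strips. -/
noncomputable def boxBound (e k : ℕ) (t u : ℝ) : ℝ :=
  (2 * t) ^ e + 2 * 2 ^ e * (t ^ e * (4 * u) ^ k) + 2 * e + 2

lemma lintegral_coverNum_cellFamily_Icc_le (ha : 0 ≤ a) (hb : b ≤ 1) (ha0 : a (Fin.last e) = 0)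
    (ha_two : ∀ j : Fin e, two j = false → a j.castSucc = 0) (hn : 0 < n) (hT : n < 2 ^ T)
    (hlev : ∀ V ⊆ levelVectors T two,
      n / (levelVectors T two).card * V.card ≤ (Finset.univ.filter (lev · ∈ V)).card) :
    ∫⁻ ω, coverNum (cellFamily lev ω) (Finset.univ.image ω) (Set.Icc a b)
        ∂Measure.pi (fun _ : Fin n => uniformCube (e + 1)) ≤
      ENNReal.ofReal
        (boxBound e (Finset.univ.filter (two · = true)).card T (1 + Real.log T)) := by
  unfold boxBound
  have hT0 : 0 < T := Nat.pos_of_ne_zero (by rintro rfl; omega)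
  have hM : 0 ≤ 4 * (1 + Real.log T) := by
    linarith [Real.log_nonneg (Nat.one_le_cast.2 hT0 : (1 : ℝ) ≤ T)]
  have htrivial := lintegral_coverNum_cellFamily_le_mul_measure lev
    (measurableSet_Icc : MeasurableSet (Set.Icc a b))
  rcases lt_or_ge n (levelVectors T two).card with hnL | hLn
  · refine (htrivial.trans (mul_le_of_le_one_right' prob_le_one)).trans ?_
    rw [← ENNReal.ofReal_natCast]
    refine ENNReal.ofReal_le_ofReal ?_
    have hn_le : (n : ℝ) ≤ (2 * T) ^ e := by
      exact_mod_cast hnL.le.trans (card_levelVectors_le hT0 two)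
    refine hn_le.trans ?_
    simp only [add_assoc]
    exact le_add_of_nonneg_right (by positivity)
  by_cases hthin : ∃ j : Fin e, b j.castSucc - a j.castSucc ≤ 2 / n
  · obtain ⟨j, hj⟩ := hthin
    refine (htrivial.trans (mul_uniformCube_Icc_le_of_sub_le hn hj)).trans ?_
    exact ENNReal.ofReal_le_ofReal (le_add_of_nonneg_left (by positivity))
  · push Not at hthin
    obtain ⟨h, W, hscheme⟩ := exists_isDyadicScheme ha hb ha_two (fun j => (hthin j).le) hn hT
    refine (lintegral_coverNum_cellFamily_le_of_isDyadicScheme ha hb ha0 hscheme hn hT0 hLn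
      hlev).trans (le_trans (le_of_eq ?_)
        (ENNReal.ofReal_le_ofReal (le_add_of_nonneg_right zero_le_two)))
    rw [prod_ofReal_mul_ite hM, ENNReal.ofReal_add (by positivity) (by positivity),
      ENNReal.ofReal_add (by positivity) (by positivity), add_assoc,
      ENNReal.ofReal_mul (p := 2 * 2 ^ e) (by positivity)]
    norm_num [ENNReal.ofReal_mul, ENNReal.ofReal_pow]

end Box

section Logarithms

variable {n : ℕ}

lemma four_le_logb_two (hn : 16 ≤ n) : 4 ≤ Real.logb 2 n := by
  rw [Real.le_logb_iff_rpow_le one_lt_two (by positivity)]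
  norm_num
  exact_mod_cast hn

lemma two_le_logb_two {x : ℝ} (hx : 4 ≤ x) : 2 ≤ Real.logb 2 x := by
  rw [Real.le_logb_iff_rpow_le one_lt_two (by positivity)]
  norm_num
  exact hx

lemma natLog_add_one_le_two_mul_logb (hn : 16 ≤ n) :
    ((Nat.log 2 n + 1 : ℕ) : ℝ) ≤ 2 * Real.logb 2 n := by
  have hfloor : (Nat.log 2 n : ℝ) ≤ Real.logb 2 n := by exact_mod_cast Real.natLog_le_logb n 2
  push_cast
  linarith [four_le_logb_two hn]

lemma one_add_log_le_two_mul_logb {t x : ℝ} (ht : 0 < t) (htx : t ≤ 2 * x) (hx : 4 ≤ x) :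
    1 + Real.log t ≤ 2 * Real.logb 2 x := by
  have hlogb := two_le_logb_two hx
  have hlog2 : Real.log 2 ≤ 1 := by linarith [Real.log_two_lt_d9]
  have hlogx : Real.log x ≤ Real.logb 2 x := by
    rw [← Real.log_div_log]
    exact le_div_self (Real.log_nonneg (by linarith)) (Real.log_pos one_lt_two) hlog2
  calc 1 + Real.log t ≤ 1 + Real.log (2 * x) := by gcongr
    _ = 1 + (Real.log 2 + Real.log x) := by rw [Real.log_mul two_ne_zero (by positivity)]
    _ ≤ 2 * Real.logb 2 x := by linarith

/-- The constant `C` of the theorem for ranges in `e + 1` dimensions, `k` of whose coordinates are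
two-sided. -/
noncomputable def coverConst (e k : ℕ) : ℝ := 4 ^ e * (1 + 2 * 8 ^ k) + 2 * e + 2

lemma one_add_two_pow_le_coverConst (e k : ℕ) : 1 + 2 ^ e ≤ coverConst e k := by
  have h24 : (2 : ℝ) ^ e ≤ 4 ^ e := pow_le_pow_left₀ zero_le_two (by norm_num) e
  have hrest : (0 : ℝ) ≤ 4 ^ e * (2 * 8 ^ k) + 2 * e := by positivity
  unfold coverConst
  linarith

lemma boxBound_le_coverConst_mul (e k : ℕ) {t u l c : ℝ} (ht : 0 ≤ t) (htl : t ≤ 2 * l)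
    (hl : 1 ≤ l) (hu : 0 ≤ u) (huc : u ≤ 2 * c) (hc : 1 ≤ c) :
    boxBound e k t u ≤ coverConst e k * l ^ e * c ^ k := by
  have hle : 1 ≤ l ^ e := one_le_pow₀ hl
  have hck : 1 ≤ c ^ k := one_le_pow₀ hc
  calc boxBound e k t u
      ≤ (2 * (2 * l)) ^ e + 2 * 2 ^ e * ((2 * l) ^ e * (4 * (2 * c)) ^ k) + 2 * e + 2 := by
        unfold boxBound
        gcongr
    _ = 4 ^ e * l ^ e * 1 + 2 * 4 ^ e * 8 ^ k * (l ^ e * c ^ k) + (2 * e + 2) * (1 * 1) := by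
        simp only [mul_pow, show (4 : ℝ) = 2 * 2 by norm_num, show (8 : ℝ) = 2 * 2 * 2 by norm_num]
        ring
    _ ≤ 4 ^ e * l ^ e * c ^ k + 2 * 4 ^ e * 8 ^ k * (l ^ e * c ^ k) +
          (2 * e + 2) * (l ^ e * c ^ k) := by
        gcongr
    _ = coverConst e k * l ^ e * c ^ k := by unfold coverConst; ring

end Logarithms

lemma lintegral_coverNum_eq_of_inter_Icc {d n : ℕ}
    {𝒮 : (Fin n → Fin d → ℝ) → Finset (Finset (Fin d → ℝ))} {r r' : Set (Fin d → ℝ)}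
    (h : r ∩ Set.Icc 0 1 = r') :
    ∫⁻ ω, coverNum (𝒮 ω) (Finset.univ.image ω) r ∂Measure.pi (fun _ : Fin n => uniformCube d) =
      ∫⁻ ω, coverNum (𝒮 ω) (Finset.univ.image ω) r'
        ∂Measure.pi (fun _ : Fin n => uniformCube d) := by
  refine lintegral_congr_ae ((ae_forall_mem_Icc d).mono fun ω hω => coverNum_congr ?_)
  have hcube : ↑(Finset.univ.image ω) ⊆ Set.Icc (0 : Fin d → ℝ) 1 := by
    simpa [Set.range_subset_iff] using hω
  rw [← h, Set.inter_assoc, Set.inter_eq_right.2 hcube]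

lemma exists_lintegral_coverNum_cellFamily_le {e k n : ℕ} (hke : k ≤ e) (hn : 16 ≤ n) :
    ∃ lev : Fin n → Fin e → ℕ, ∀ r, DPlusKSided (e + 1) k r →
      ∫⁻ ω, coverNum (cellFamily lev ω) (Finset.univ.image ω) r
          ∂Measure.pi (fun _ : Fin n => uniformCube (e + 1)) ≤
        ENNReal.ofReal (coverConst e k * Real.logb 2 n ^ e *
          Real.logb 2 (Real.logb 2 n) ^ k) := by
  let two (j : Fin e) : Bool := decide ((j : ℕ) < k)
  have hk : (Finset.univ.filter (two · = true)).card = k := by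
    simp [two, Fin.card_filter_val_lt, hke]
  obtain ⟨lev, hlev⟩ := exists_equidistributed (levelVectors_nonempty (Nat.log 2 n).succ_pos two) n
  refine ⟨lev, fun r hr => ?_⟩
  obtain ⟨a, b, ha, hb, ha0, hrab⟩ := exists_inter_Icc_eq_Icc hr
  rw [lintegral_coverNum_eq_of_inter_Icc hrab]
  refine (lintegral_coverNum_cellFamily_Icc_le ha hb (ha0 _ hke)
    (fun j hj => ha0 _ (by simpa [two] using hj)) (by omega)
    (Nat.lt_pow_succ_log_self one_lt_two n) hlev).trans (ENNReal.ofReal_le_ofReal ?_)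
  have hl := four_le_logb_two hn
  have hT := natLog_add_one_le_two_mul_logb hn
  rw [hk]
  exact boxBound_le_coverConst_mul e k (by positivity) hT (by linarith)
    (by linarith [Real.log_natCast_nonneg (Nat.log 2 n + 1)])
    (one_add_log_le_two_mul_logb (by positivity) hT hl) (by linarith [two_le_logb_two hl])

end RangeCover

theorem random_points_upper_bound_expected_general (d k : ℕ) (hkd : k < d) :
    ∃ C : ℝ, ∀ n : ℕ, 16 ≤ n →
      ∃ 𝒮 : (Fin n → (Fin d → ℝ)) → Finset (Finset (Fin d → ℝ)),
        (∀ ω, ∀ s ∈ 𝒮 ω, s.Nonempty ∧ s ⊆ Finset.image ω Finset.univ) ∧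
        (∀ ω, ((𝒮 ω).card : ℝ) ≤ C * n) ∧
        ∀ r : Set (Fin d → ℝ), DPlusKSided d k r →
          ∫⁻ ω, coverNum (𝒮 ω) (Finset.image ω Finset.univ) r
              ∂(Measure.pi fun _ : Fin n => uniformCube d) ≤
            ENNReal.ofReal
              (C * (Real.logb 2 n) ^ (d - 1) * (Real.logb 2 (Real.logb 2 n)) ^ k) := by
  obtain ⟨e, rfl⟩ := Nat.exists_eq_add_one_of_ne_zero (Nat.ne_zero_of_lt hkd)
  refine ⟨RangeCover.coverConst e k, fun n hn => ?_⟩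
  obtain ⟨lev, hlev⟩ :=
    RangeCover.exists_lintegral_coverNum_cellFamily_le (Nat.le_of_lt_succ hkd) hn
  refine ⟨RangeCover.cellFamily lev,
    fun ω s hs => RangeCover.nonempty_and_subset_of_mem_cellFamily hs, fun ω => ?_, hlev⟩
  calc ((RangeCover.cellFamily lev ω).card : ℝ) ≤ (1 + 2 ^ e) * n := by
        exact_mod_cast RangeCover.card_cellFamily_le lev ω
    _ ≤ RangeCover.coverConst e k * n := by
        gcongr
        exact RangeCover.one_add_two_pow_le_coverConst e k

/-- Expected-case upper bound for `n` i.i.d. uniform points in `[0,1]^d`: there is a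
(measurably chosen) family `𝒮` of at most `C·n` nonempty subsets of the point set
(almost surely), such that for every fixed `(d+k)`-sided query range the expected minimum
cover number is at most `C·(log₂ n)^{d-1}·(log₂ log₂ n)^k`. -/
theorem random_points_upper_bound_expected :
    ∀ d k : ℕ, 2 ≤ d → 1 ≤ k → k ≤ d - 1 →
      ∃ C : ℝ, ∀ n : ℕ, 16 ≤ n →
        ∃ 𝒮 : (Fin n → (Fin d → ℝ)) → Finset (Finset (Fin d → ℝ)),
          (∀ ω, ∀ s ∈ 𝒮 ω, s.Nonempty ∧ s ⊆ Finset.image ω Finset.univ) ∧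
          (∀ᵐ ω ∂(Measure.pi fun _ : Fin n => uniformCube d),
            ((𝒮 ω).card : ℝ) ≤ C * n) ∧
          ∀ r : Set (Fin d → ℝ), DPlusKSided d k r →
            ∫⁻ ω, coverNum (𝒮 ω) (Finset.image ω Finset.univ) r
                ∂(Measure.pi fun _ : Fin n => uniformCube d) ≤
              ENNReal.ofReal
                (C * (Real.logb 2 n) ^ (d - 1) * (Real.logb 2 (Real.logb 2 n)) ^ k) := by
  intro d k hd _ hkd
  obtain ⟨C, hC⟩ := random_points_upper_bound_expected_general d k (by omega)
  exact ⟨C, fun n hn => (hC n hn).imp fun 𝒮 h𝒮 => ⟨h𝒮.1, .of_forall h𝒮.2.1, h𝒮.2.2⟩⟩
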